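/- For every tree T with at least 3 vertices, the maximum number of pairwise independent (≤2)-separations of T equals β(T). -/

import Mathlib

open SimpleGraph

/-- `(A, B)` is a `k`-separation of `H`: edge-disjoint subgraphs whose union is `H`,
with `V(A) \ V(B)` and `V(B) \ V(A)` nonempty and `|V(A) ∩ V(B)| = k`. -/
def IsSeparation {V : Type*} (H : SimpleGraph V) (A B : H.Subgraph) (k : ℕ) : Prop :=
  Disjoint A.edgeSet B.edgeSet ∧ A ⊔ B = ⊤ ∧
    (A.verts \ B.verts).Nonempty ∧ (B.verts \ A.verts).Nonempty ∧
    (A.verts ∩ B.verts).ncard = k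

/-- `(A, B)` is a `(≤2)`-separation of `H`. -/
def IsSepLE2 {V : Type*} (H : SimpleGraph V) (A B : H.Subgraph) : Prop :=
  ∃ k ≤ 2, IsSeparation H A B k

/-- The edge set of `A⁻`: the edges of `A` except those joining two vertices
of `V(A) ∩ V(B)`. -/
def sepMinusEdges {V : Type*} {H : SimpleGraph V} (A B : H.Subgraph) : Set (Sym2 V) :=
  {e | e ∈ A.edgeSet ∧ ¬ ∀ v ∈ e, v ∈ A.verts ∩ B.verts}

/-- Separations `(A,B)` and `(C,D)` are independent. -/
def IndepSeps {V : Type*} {H : SimpleGraph V} (A B C D : H.Subgraph) : Prop :=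
  sepMinusEdges A B ∩ sepMinusEdges C D = ∅ ∧
    (A.verts \ B.verts) ∩ (C.verts \ D.verts) = ∅

/-- `β(T)`: the maximum size of a stable set in the subgraph of `T` induced by the
vertices of degree at most 2. -/
noncomputable def beta {V : Type*} (T : SimpleGraph V) : ℕ :=
  sSup {n | ∃ S : Set V, S.ncard = n ∧ (∀ v ∈ S, (T.neighborSet v).ncard ≤ 2) ∧
    (∀ u ∈ S, ∀ w ∈ S, ¬ T.Adj u w)}

/-!
The vertices of degree at most `2` in a stable set yield separations by their stars: `v` is the
only vertex of the star at `v` off the cut set `N(v)`, and the stars of distinct nonadjacent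
vertices share no edge. A vertex adjacent to all others gives no separation this way, but then the
stable set is a single vertex, which can be replaced by any vertex of degree at most `1`.

Conversely, let `(A, B)` be a separation of a forest with `|V(A) ∩ V(B)| ≤ 2`, and put
`X = V(A) \ V(B)`, `Y = V(A)`. All edges at `X` lie in `A`, so `∑ x ∈ X, deg x` counts each edge
of the forest induced on `Y` at most once, and a second time only if it lies in the forest induced
on `X`. Hence `∑ x ∈ X, deg x ≤ (|Y| - 1) + (|X| - 1) ≤ 2 |X|`, and some `x ∈ X` has degree at most
`2`. Independence makes the vertices so chosen distinct and pairwise nonadjacent.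
-/

section EdgeCount

variable {V : Type*} {G : SimpleGraph V}

theorem card_edgeFinset_add_one_le_of_isAcyclic [Fintype V] [Nonempty V] [Fintype G.edgeSet]
    (hG : G.IsAcyclic) : G.edgeFinset.card + 1 ≤ Fintype.card V := by
  classical
  obtain ⟨T, hGT, -, hT⟩ := connected_top.exists_isTree_le_of_le_of_isAcyclic le_top hG
  rw [← hT.card_edgeFinset]
  gcongr

theorem card_interedges_self_add_two_le [DecidableRel G.Adj] (hG : G.IsAcyclic) {X : Finset V}
    (hX : X.Nonempty) : (G.interedges X X).card + 2 ≤ 2 * X.card := by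
  classical
  have : Nonempty (X : Set V) := hX.to_subtype
  have hedges := card_edgeFinset_add_one_le_of_isAcyclic (hG.induce (X : Set V))
  have hdarts : (G.interedges X X).card = 2 * (G.induce (X : Set V)).edgeFinset.card := by
    rw [two_mul_card_edgeFinset]
    refine (Finset.card_bij (fun p _ ↦ (p.1.1, p.2.1)) ?_ ?_ ?_).symm
    · simp [interedges, Rel.mem_interedges_iff]
    · exact fun p _ q _ h ↦
        Prod.ext (Subtype.ext (congrArg Prod.fst h)) (Subtype.ext (congrArg Prod.snd h))
    · simp +contextual [interedges, Rel.mem_interedges_iff]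
  have hcard : Fintype.card (X : Set V) = X.card := by simp
  lia

theorem two_mul_card_interedges_le [DecidableRel G.Adj] {X Y : Finset V} (hXY : X ⊆ Y) :
    2 * (G.interedges X Y).card ≤ (G.interedges X X).card + (G.interedges Y Y).card := by
  classical
  have hunion : G.interedges X Y ∪ G.interedges Y X ⊆ G.interedges Y Y :=
    Finset.union_subset (G.interedges_mono hXY subset_rfl) (G.interedges_mono subset_rfl hXY)
  have hinter : G.interedges X Y ∩ G.interedges Y X ⊆ G.interedges X X := by
    intro p
    simp only [interedges, Finset.mem_inter, Rel.mem_interedges_iff]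
    tauto
  have hcomm : (G.interedges X Y).card = (G.interedges Y X).card :=
    @Rel.card_interedges_comm _ _ _ G.symm X Y
  calc 2 * (G.interedges X Y).card
      = (G.interedges X Y ∩ G.interedges Y X).card
        + (G.interedges X Y ∪ G.interedges Y X).card := by
        rw [Finset.card_inter_add_card_union, ← hcomm, two_mul]
    _ ≤ (G.interedges X X).card + (G.interedges Y Y).card := by gcongr

theorem card_interedges_eq_sum_degree [DecidableRel G.Adj] [G.LocallyFinite] {X Y : Finset V}
    (hY : ∀ x ∈ X, G.neighborFinset x ⊆ Y) :
    (G.interedges X Y).card = ∑ x ∈ X, G.degree x := by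
  rw [interedges, Rel.interedges, Finset.card_filter, Finset.sum_product]
  refine Finset.sum_congr rfl fun x hx ↦ ?_
  rw [← Finset.card_filter, ← G.card_neighborFinset_eq_degree]
  congr 1
  ext y
  simpa using fun hxy ↦ hY x hx ((G.mem_neighborFinset x y).2 hxy)

theorem sum_degree_add_two_le [G.LocallyFinite] (hG : G.IsAcyclic) {X Y : Finset V}
    (hX : X.Nonempty) (hXY : X ⊆ Y) (hY : ∀ x ∈ X, G.neighborFinset x ⊆ Y) :
    ∑ x ∈ X, G.degree x + 2 ≤ X.card + Y.card := by
  classical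
  rw [← card_interedges_eq_sum_degree hY]
  have hXYcount := two_mul_card_interedges_le (G := G) hXY
  have hXcount := card_interedges_self_add_two_le hG hX
  have hYcount := card_interedges_self_add_two_le hG (hX.mono hXY)
  lia

theorem exists_degree_le_two [G.LocallyFinite] (hG : G.IsAcyclic) {X Y : Finset V}
    (hX : X.Nonempty) (hXY : X ⊆ Y) (hY : ∀ x ∈ X, G.neighborFinset x ⊆ Y)
    (hcard : Y.card ≤ X.card + 2) : ∃ x ∈ X, G.degree x ≤ 2 := by
  refine Finset.exists_le_of_sum_le hX ?_
  rw [Finset.sum_const, smul_eq_mul]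
  have hsum := sum_degree_add_two_le hG hX hXY hY
  lia

theorem exists_degree_le_one [Finite V] [Nonempty V] [G.LocallyFinite] (hG : G.IsAcyclic) :
    ∃ v, G.degree v ≤ 1 := by
  have := Fintype.ofFinite V
  have hsum := sum_degree_add_two_le hG Finset.univ_nonempty subset_rfl
    fun x _ ↦ Finset.subset_univ (G.neighborFinset x)
  obtain ⟨v, -, hv⟩ : ∃ v ∈ Finset.univ, G.degree v < 2 :=
    Finset.exists_lt_of_sum_lt (by rw [Finset.sum_const, smul_eq_mul]; lia)
  exact ⟨v, Nat.le_of_lt_succ hv⟩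

theorem ncard_neighborSet_eq_degree (v : V) [Fintype (G.neighborSet v)] :
    (G.neighborSet v).ncard = G.degree v := by
  rw [Set.ncard_eq_toFinset_card', Set.toFinset_card, card_neighborSet_eq_degree]

end EdgeCount

section Separations

variable {V ι : Type*} {G : SimpleGraph V} {A B : G.Subgraph} {x y : V}

theorem IsSepLE2.adj_of_mem_diff (h : IsSepLE2 G A B) (hx : x ∈ A.verts \ B.verts)
    (hxy : G.Adj x y) : A.Adj x y := by
  obtain ⟨k, -, -, hAB, -⟩ := h
  have hsup : (A ⊔ B).Adj x y := by rwa [hAB, Subgraph.top_adj]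
  exact hsup.resolve_right fun hB ↦ hx.2 hB.fst_mem

theorem IsSepLE2.mem_sepMinusEdges (h : IsSepLE2 G A B) (hx : x ∈ A.verts \ B.verts)
    (hxy : G.Adj x y) : s(x, y) ∈ sepMinusEdges A B :=
  ⟨h.adj_of_mem_diff hx hxy, fun hmem ↦ hx.2 (hmem x (Sym2.mem_mk_left x y)).2⟩

theorem IsSepLE2.exists_ncard_neighborSet_le_two [Finite V] (hG : G.IsAcyclic)
    (h : IsSepLE2 G A B) : ∃ x ∈ A.verts \ B.verts, (G.neighborSet x).ncard ≤ 2 := by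
  classical
  have := Fintype.ofFinite V
  have hnbr : ∀ x ∈ (A.verts \ B.verts).toFinset, G.neighborFinset x ⊆ A.verts.toFinset := by
    intro x hx y hxy
    rw [Set.mem_toFinset] at hx ⊢
    exact (h.adj_of_mem_diff hx ((G.mem_neighborFinset x y).1 hxy)).snd_mem
  obtain ⟨k, hk, -, -, hne, -, hcut⟩ := h
  have hcard : A.verts.toFinset.card ≤ (A.verts \ B.verts).toFinset.card + 2 := by
    rw [← Set.ncard_eq_toFinset_card', ← Set.ncard_eq_toFinset_card',
      ← Set.ncard_inter_add_ncard_sdiff_eq_ncard A.verts B.verts]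
    lia
  obtain ⟨x, hx, hdeg⟩ := exists_degree_le_two hG (Set.toFinset_nonempty.2 hne)
    (Set.toFinset_subset_toFinset.2 Set.sdiff_subset) hnbr hcard
  exact ⟨x, Set.mem_toFinset.1 hx, (ncard_neighborSet_eq_degree x).trans_le hdeg⟩

/-- A family of pairwise independent `(≤2)`-separations of `G`, the pair `F i` standing for the
separation `((F i).1, (F i).2)`. -/
def IsIndepSepFamily (G : SimpleGraph V) (F : ι → G.Subgraph × G.Subgraph) : Prop :=
  (∀ i, IsSepLE2 G (F i).1 (F i).2) ∧
    ∀ i j, i ≠ j → IndepSeps (F i).1 (F i).2 (F j).1 (F j).2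

namespace IsIndepSepFamily

variable {F : ι → G.Subgraph × G.Subgraph} {f : ι → V}

theorem injective_of_mem_diff (hF : IsIndepSepFamily G F)
    (hf : ∀ i, f i ∈ (F i).1.verts \ (F i).2.verts) : Function.Injective f := by
  intro i j hij
  by_contra hne
  exact Set.eq_empty_iff_forall_notMem.1 (hF.2 i j hne).2 (f i) ⟨hf i, hij ▸ hf j⟩

theorem isIndepSet_range (hF : IsIndepSepFamily G F)
    (hf : ∀ i, f i ∈ (F i).1.verts \ (F i).2.verts) : G.IsIndepSet (Set.range f) := by
  rintro _ ⟨i, rfl⟩ _ ⟨j, rfl⟩ hne hadj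
  refine Set.eq_empty_iff_forall_notMem.1 (hF.2 i j (ne_of_apply_ne f hne)).1 s(f i, f j) ⟨?_, ?_⟩
  · exact (hF.1 i).mem_sepMinusEdges (hf i) hadj
  · rw [Sym2.eq_swap]
    exact (hF.1 j).mem_sepMinusEdges (hf j) hadj.symm

theorem exists_isIndepSet [Finite V] (hG : G.IsAcyclic) (hF : IsIndepSepFamily G F) :
    ∃ S : Set V, S.ncard = Nat.card ι ∧ (∀ v ∈ S, (G.neighborSet v).ncard ≤ 2) ∧
      G.IsIndepSet S := by
  choose f hf hdeg using fun i ↦ (hF.1 i).exists_ncard_neighborSet_le_two hG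
  exact ⟨Set.range f, Set.ncard_range_of_injective (hF.injective_of_mem_diff hf),
    Set.forall_mem_range.2 hdeg, hF.isIndepSet_range hf⟩

end IsIndepSepFamily

end Separations

section Stars

variable {V : Type*}

/-- The star of `G` at `v`, formed by `v`, its neighbours and the edges at `v`; it is the side
containing `v` of the separation that cuts `v` off from the rest of `G`. -/
def starSubgraph (G : SimpleGraph V) (v : V) : G.Subgraph where
  verts := insert v (G.neighborSet v)
  Adj a b := G.Adj a b ∧ (a = v ∨ b = v)
  adj_sub h := h.1
  edge_vert := by
    rintro a b ⟨h, rfl | rfl⟩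
    · exact Set.mem_insert a _
    · exact Set.mem_insert_of_mem b h.symm
  symm := ⟨fun _ _ h ↦ ⟨h.1.symm, h.2.symm⟩⟩

/-- The pair of the star at `v` and `G - v`, which separates `v` from its non-neighbours with cut
set `N(v)`; it is a separation only if `v` has a non-neighbour. -/
def starSep (G : SimpleGraph V) (v : V) : G.Subgraph × G.Subgraph :=
  (starSubgraph G v, (⊤ : G.Subgraph).deleteVerts {v})

variable {G : SimpleGraph V} {a b v w : V}

theorem mem_starSep_fst_verts : w ∈ (starSep G v).1.verts ↔ w = v ∨ G.Adj v w := Iff.rfl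

theorem mem_starSep_snd_verts : w ∈ (starSep G v).2.verts ↔ w ≠ v := by
  simp [starSep]

theorem starSep_fst_adj : (starSep G v).1.Adj a b ↔ G.Adj a b ∧ (a = v ∨ b = v) := Iff.rfl

theorem starSep_snd_adj : (starSep G v).2.Adj a b ↔ G.Adj a b ∧ a ≠ v ∧ b ≠ v := by
  simp only [starSep, Subgraph.deleteVerts_adj, Subgraph.verts_top, Set.mem_univ, true_and,
    Set.mem_singleton_iff, Subgraph.top_adj]
  tauto

theorem starSep_verts_inter :
    (starSep G v).1.verts ∩ (starSep G v).2.verts = G.neighborSet v := by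
  ext w
  rw [Set.mem_inter_iff, mem_starSep_fst_verts, mem_starSep_snd_verts, mem_neighborSet]
  exact ⟨fun h ↦ h.1.resolve_left h.2, fun h ↦ ⟨Or.inr h, h.ne'⟩⟩

theorem starSep_verts_diff : (starSep G v).1.verts \ (starSep G v).2.verts = {v} := by
  ext w
  rw [Set.mem_sdiff, mem_starSep_fst_verts, mem_starSep_snd_verts, Set.mem_singleton_iff]
  tauto

theorem disjoint_edgeSet_starSep :
    Disjoint (starSep G v).1.edgeSet (starSep G v).2.edgeSet := by
  rw [Set.disjoint_left, Sym2.forall]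
  intro a b
  rw [Subgraph.mem_edgeSet, Subgraph.mem_edgeSet, starSep_fst_adj, starSep_snd_adj]
  tauto

theorem starSep_sup : (starSep G v).1 ⊔ (starSep G v).2 = ⊤ := by
  ext a b
  · simp only [Subgraph.verts_sup, Set.mem_union, mem_starSep_fst_verts, mem_starSep_snd_verts,
      Subgraph.verts_top, Set.mem_univ, iff_true]
    tauto
  · rw [Subgraph.sup_adj, starSep_fst_adj, starSep_snd_adj, Subgraph.top_adj]
    tauto

theorem isSeparation_starSep (hv : ¬ G.IsUniversal v) :
    IsSeparation G (starSep G v).1 (starSep G v).2 (G.neighborSet v).ncard := by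
  refine ⟨disjoint_edgeSet_starSep, starSep_sup, ?_, ?_, congrArg Set.ncard starSep_verts_inter⟩
  · rw [starSep_verts_diff]
    exact Set.singleton_nonempty v
  · simp only [IsUniversal, not_forall] at hv
    obtain ⟨w, hvw, hadj⟩ := hv
    exact ⟨w, by simp [starSep, starSubgraph, hvw.symm, hadj]⟩

theorem indepSeps_starSep (hne : v ≠ w) (hadj : ¬ G.Adj v w) :
    IndepSeps (starSep G v).1 (starSep G v).2 (starSep G w).1 (starSep G w).2 := by
  constructor
  · rw [Set.eq_empty_iff_forall_notMem, Sym2.forall]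
    rintro a b ⟨⟨⟨hab, hv⟩, -⟩, ⟨-, hw⟩, -⟩
    rcases hv with rfl | rfl <;> rcases hw with rfl | rfl
    exacts [hne rfl, hadj hab, hadj hab.symm, hne rfl]
  · rw [starSep_verts_diff, starSep_verts_diff]
    simpa using hne.symm

theorem isIndepSepFamily_starSep {S : Set V} (hdeg : ∀ v ∈ S, (G.neighborSet v).ncard ≤ 2)
    (hS : G.IsIndepSet S) (huniv : ∀ v ∈ S, ¬ G.IsUniversal v) :
    IsIndepSepFamily G fun v : S ↦ starSep G v :=
  ⟨fun v ↦ ⟨_, hdeg v v.2, isSeparation_starSep (huniv v v.2)⟩, fun v w hne ↦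
    have hne' : (v : V) ≠ w := Subtype.coe_ne_coe.2 hne
    indepSeps_starSep hne' (hS v.2 w.2 hne')⟩

theorem eq_singleton_of_isUniversal {S : Set V} (hS : G.IsIndepSet S) (hvS : v ∈ S)
    (hv : G.IsUniversal v) : S = {v} :=
  Set.eq_singleton_iff_unique_mem.2 ⟨hvS, fun _ hw ↦
    of_not_not fun hne ↦ hS hvS hw (Ne.symm hne) (hv (Ne.symm hne))⟩

theorem exists_isIndepSet_not_isUniversal [Fintype V] (hG : G.IsAcyclic)
    (hV : 3 ≤ Fintype.card V) {S : Set V} (hdeg : ∀ v ∈ S, (G.neighborSet v).ncard ≤ 2)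
    (hS : G.IsIndepSet S) :
    ∃ S' : Set V, S'.ncard = S.ncard ∧ (∀ v ∈ S', (G.neighborSet v).ncard ≤ 2) ∧
      G.IsIndepSet S' ∧ ∀ v ∈ S', ¬ G.IsUniversal v := by
  classical
  by_cases huniv : ∀ v ∈ S, ¬ G.IsUniversal v
  · exact ⟨S, rfl, hdeg, hS, huniv⟩
  push Not at huniv
  obtain ⟨v, hvS, hv⟩ := huniv
  have : Nonempty V := ⟨v⟩
  obtain ⟨u, hu⟩ := exists_degree_le_one hG
  refine ⟨{u}, ?_, ?_, Set.pairwise_singleton u _, ?_⟩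
  · rw [eq_singleton_of_isUniversal hS hvS hv, Set.ncard_singleton, Set.ncard_singleton]
  · rintro _ rfl
    rw [ncard_neighborSet_eq_degree]
    lia
  · rintro _ rfl
    rw [← degree_lt_card_sub_one]
    lia

theorem exists_isIndepSepFamily [Fintype V] (hG : G.IsAcyclic) (hV : 3 ≤ Fintype.card V)
    {S : Set V} (hdeg : ∀ v ∈ S, (G.neighborSet v).ncard ≤ 2) (hS : G.IsIndepSet S) :
    ∃ F : Fin S.ncard → G.Subgraph × G.Subgraph, IsIndepSepFamily G F := by
  obtain ⟨S', hcard, hdeg', hS', huniv⟩ := exists_isIndepSet_not_isUniversal hG hV hdeg hS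
  let e : Fin S.ncard ≃ S' := (Finite.equivFinOfCardEq hcard).symm
  have hF := isIndepSepFamily_starSep hdeg' hS' huniv
  exact ⟨fun i ↦ starSep G (e i), fun i ↦ hF.1 (e i), fun i j hij ↦
    hF.2 (e i) (e j) (e.injective.ne hij)⟩

end Stars

theorem stmt0_general {V : Type*} [Fintype V] (G : SimpleGraph V) (hG : G.IsAcyclic)
    (hV : 3 ≤ Fintype.card V) :
    sSup {n | ∃ F : Fin n → G.Subgraph × G.Subgraph,
        (∀ i, IsSepLE2 G (F i).1 (F i).2) ∧
        (∀ i j, i ≠ j → IndepSeps (F i).1 (F i).2 (F j).1 (F j).2)} = beta G := by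
  rw [beta]
  congr 1
  ext n
  constructor
  · rintro ⟨F, hF⟩
    obtain ⟨S, hcard, hdeg, hS⟩ := IsIndepSepFamily.exists_isIndepSet hG hF
    exact ⟨S, hcard.trans (Nat.card_fin n), hdeg, fun u hu w hw hadj ↦ hS hu hw hadj.ne hadj⟩
  · rintro ⟨S, rfl, hdeg, hS⟩
    exact exists_isIndepSepFamily hG hV hdeg fun u hu w hw _ ↦ hS u hu w hw

/-- For every tree `T` with at least 3 vertices, the maximum number of pairwise independent
`(≤2)`-separations of `T` equals `β(T)`. -/
theorem stmt0 {V : Type*} [Fintype V] (T : SimpleGraph V) (hT : T.IsTree)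
    (hV : 3 ≤ Fintype.card V) :
    sSup {n | ∃ F : Fin n → T.Subgraph × T.Subgraph,
        (∀ i, IsSepLE2 T (F i).1 (F i).2) ∧
        (∀ i j, i ≠ j → IndepSeps (F i).1 (F i).2 (F j).1 (F j).2)} = beta T :=
  stmt0_general T hT.isAcyclic hV
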